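/- (Exponential decay of the phase diameter) Let n ≥ 2 be an integer and let (θ_1,...,θ_N) be a global solution of the Winfree model of order n with identical natural frequencies ν_i = ν > 0 for all i. Define R(t) := (max_i θ_i(t) − min_i θ_i(t))/2. Assume 0 < κ < ν/(2^{n+1} a_n), 0 < α < ( (π/(2^{n+1} a_n)) · n/(n+1) − 1/2^n ) · (1/√(2n−1)) · (2n/(2n−1))^{n−1}, and R(0) < α · exp( −α √(2n−1) ((2n−1)/(2n))^{n−1} − 1/2^{n−1} ). Then there exist positive constants β̃_1, β̃_2, Λ̃_1, Λ̃_2 such that for all t ≥ 0, β̃_1 e^{−Λ̃_1 t} R(0) ≤ R(t) ≤ β̃_2 e^{−Λ̃_2 t} R(0) < α. -/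

import Mathlib

open Real Filter

/-- Normalizing constant `a_n = 2^n (n!)^2 / (2n)!`. -/
noncomputable def aW (n : ℕ) : ℝ :=
  2 ^ n * (Nat.factorial n : ℝ) ^ 2 / (Nat.factorial (2 * n) : ℝ)

/-- Influence function `I_n(θ) = a_n (1 + cos θ)^n`. -/
noncomputable def influence (n : ℕ) (θ : ℝ) : ℝ := aW n * (1 + Real.cos θ) ^ n

/-- Sensitivity function `S(θ) = -sin θ`. -/
noncomputable def sens (θ : ℝ) : ℝ := -Real.sin θ

/-- A global solution of the Winfree model of order `n` with `N` oscillators,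
natural frequencies `ν` and coupling strength `κ`:
`θ_i'(t) = ν_i + (κ/N) S(θ_i(t)) Σ_j I_n(θ_j(t))` for all `t ≥ 0`. -/
def IsWinfreeSol (n N : ℕ) (ν : Fin N → ℝ) (κ : ℝ) (θ : Fin N → ℝ → ℝ) : Prop :=
  ∀ i : Fin N, ∀ t : ℝ, 0 ≤ t →
    HasDerivAt (θ i)
      (ν i + (κ / N) * sens (θ i t) * ∑ j : Fin N, influence n (θ j t)) t

/-!
The order of identical oscillators is preserved, so the ensemble is controlled by its two extremal
members. Let `r` be half their gap, `φ` their midpoint and `J` the mean influence. Then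
`r' = -κ J cos φ sin r`, that is, `log (tan (r / 2))` has derivative `-κ J cos φ`.

As long as `r ≤ α`, the mean influence is within `max |I_n'| * α` of `I_n(φ)`, and `φ` moves with
velocity between `ν / 2` and `3 * ν / 2`, so the derivative can be integrated against `φ`. The mean
of `I_n cos` over a full turn is `n / (n + 1)`, which under the bound on `α` beats all errors: every
full turn of `φ` contracts `tan (r / 2)` by a fixed factor, and an incomplete turn expands it by at
most another. The bound on `R 0` absorbs this single expansion, and a continuity argument then gives
`r < α` for all times, hence exponential decay. The lower bound is Grönwall's inequality.
-/

section Calculus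

open Set MeasureTheory Topology

theorem iSup_sub_iInf_eq_sub {ι : Type*} {x : ι → ℝ} {i j : ι}
    (h : ∀ k, x k ∈ Icc (x j) (x i)) : (⨆ k, x k) - (⨅ k, x k) = x i - x j := by
  have hmax : IsGreatest (range x) (x i) :=
    ⟨mem_range_self i, forall_mem_range.2 fun k => (h k).2⟩
  have hmin : IsLeast (range x) (x j) :=
    ⟨mem_range_self j, forall_mem_range.2 fun k => (h k).1⟩
  rw [iSup, iInf, hmax.csSup_eq, hmin.csInf_eq]

theorem pow_mul_add_one_sub_mul_le_one (m : ℕ) {s : ℝ} (hs : 0 ≤ s) :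
    s ^ m * (m + 1 - m * s) ≤ 1 := by
  induction m with
  | zero => simp
  | succ m ih =>
    have hsq : 0 ≤ ((m : ℝ) + 1) * s ^ m * (1 - s) ^ 2 := by positivity
    calc s ^ (m + 1) * (((m + 1 : ℕ) : ℝ) + 1 - ((m + 1 : ℕ) : ℝ) * s)
        = s ^ m * (m + 1 - m * s) - (m + 1) * s ^ m * (1 - s) ^ 2 := by push_cast; ring
      _ ≤ 1 := by linarith

theorem convexOn_tan_Ico : ConvexOn ℝ (Ico 0 (π / 2)) tan := by
  have hcos : ∀ x ∈ Ico 0 (π / 2), 0 < cos x := fun x hx =>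
    cos_pos_of_mem_Ioo ⟨by linarith [hx.1, pi_pos], hx.2⟩
  have hdiff : ∀ x ∈ Ico 0 (π / 2), DifferentiableAt ℝ tan x := fun x hx =>
    differentiableAt_tan.2 (hcos x hx).ne'
  refine MonotoneOn.convexOn_of_deriv (convex_Ico _ _)
    (fun x hx => (hdiff x hx).continuousAt.continuousWithinAt)
    (fun x hx => (hdiff x (interior_subset hx)).differentiableWithinAt) fun x hx y hy hxy => ?_
  have hx' := interior_subset hx
  have hy' := interior_subset hy
  have hcos_le : cos y ≤ cos x :=
    cos_le_cos_of_nonneg_of_le_pi hx'.1 (by linarith [hy'.2, pi_pos]) hxy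
  have := hcos y hy'
  rw [deriv_tan, deriv_tan]
  gcongr

theorem tan_mul_le_mul_tan {c y : ℝ} (hc0 : 0 ≤ c) (hc1 : c ≤ 1) (hy0 : 0 ≤ y) (hy : y < π / 2) :
    tan (c * y) ≤ c * tan y := by
  simpa using convexOn_tan_Ico.2 ⟨hy0, hy⟩ ⟨le_rfl, by positivity⟩ hc0 (sub_nonneg.2 hc1)
    (add_sub_cancel c 1)

theorem lt_of_forall_Icc_le_imp_lt {r : ℝ → ℝ} {a α : ℝ} (hr : ContinuousOn r (Ici a))
    (ha : r a ≤ α) (h : ∀ T, a ≤ T → (∀ t ∈ Icc a T, r t ≤ α) → r T < α) {t : ℝ} (ht : a ≤ t) :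
    r t < α := by
  by_contra! hαt
  set S := Ici a ∩ r ⁻¹' Ici α
  have hSbdd : BddBelow S := ⟨a, fun _ hs => hs.1⟩
  have hT : sInf S ∈ S :=
    (hr.preimage_isClosed_of_isClosed isClosed_Ici isClosed_Ici).csInf_mem ⟨t, ht, hαt⟩ hSbdd
  obtain ⟨s, hs, hsα⟩ :=
    intermediate_value_Icc hT.1 (hr.mono Icc_subset_Ici_self) ⟨ha, hT.2⟩
  have hsT : s = sInf S := le_antisymm hs.2 (csInf_le hSbdd ⟨hs.1, hsα.ge⟩)
  refine (h (sInf S) hT.1 fun u hu => ?_).not_ge hT.2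
  rcases hu.2.lt_or_eq with hlt | heq
  · exact (not_le.1 fun hαu => notMem_of_lt_csInf hlt hSbdd ⟨hu.1, hαu⟩).le
  · rw [heq, ← hsT, hsα]

theorem norm_le_norm_mul_exp_of_norm_deriv_le {E : Type*} [NormedAddCommGroup E]
    [NormedSpace ℝ E] {f f' : ℝ → E} {a b K : ℝ} (hab : a ≤ b)
    (hf : ∀ t ∈ Icc a b, HasDerivAt f (f' t) t) (hK : ∀ t ∈ Icc a b, ‖f' t‖ ≤ K * ‖f t‖) :
    ‖f b‖ ≤ ‖f a‖ * exp (K * (b - a)) := by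
  rw [← gronwallBound_ε0]
  exact norm_le_gronwallBound_of_norm_deriv_right_le (f' := f')
    (fun t ht => (hf t ht).continuousAt.continuousWithinAt)
    (fun t ht => (hf t (Ico_subset_Icc_self ht)).hasDerivWithinAt) le_rfl
    (fun t ht => by simpa using hK t (Ico_subset_Icc_self ht)) b ⟨hab, le_rfl⟩

theorem norm_mul_exp_le_norm_of_norm_deriv_le {E : Type*} [NormedAddCommGroup E]
    [NormedSpace ℝ E] {f f' : ℝ → E} {a b K : ℝ} (hab : a ≤ b)
    (hf : ∀ t ∈ Icc a b, HasDerivAt f (f' t) t) (hK : ∀ t ∈ Icc a b, ‖f' t‖ ≤ K * ‖f t‖) :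
    ‖f a‖ * exp (-K * (b - a)) ≤ ‖f b‖ := by
  -- Grönwall's inequality for the time reversal of `f`.
  have hrev := norm_le_norm_mul_exp_of_norm_deriv_le (f := fun t => f (-t))
    (f' := fun t => -f' (-t)) (K := K) (neg_le_neg hab)
    (fun t ht => by
      simpa [Function.comp_def] using
        (hf (-t) ⟨le_neg.1 ht.2, neg_le.1 ht.1⟩).scomp t (hasDerivAt_neg t))
    (fun t ht => by simpa using hK (-t) ⟨le_neg.1 ht.2, neg_le.1 ht.1⟩)
  rw [neg_neg, neg_neg, neg_sub_neg] at hrev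
  rwa [neg_mul, exp_neg, mul_inv_le_iff₀ (exp_pos _)]

theorem mul_exp_le_of_abs_deriv_le {f f' : ℝ → ℝ} {a b K : ℝ} (hab : a ≤ b)
    (hf : ∀ t ∈ Icc a b, HasDerivAt f (f' t) t) (hK : ∀ t ∈ Icc a b, |f' t| ≤ K * |f t|)
    (ha : 0 ≤ f a) : f a * exp (-K * (b - a)) ≤ f b := by
  have hb : 0 ≤ f b := by
    by_contra! hneg
    obtain ⟨s, hs, hfs⟩ := intermediate_value_Icc' hab
      (fun t ht => (hf t ht).continuousAt.continuousWithinAt) ⟨hneg.le, ha⟩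
    have hsub : Icc s b ⊆ Icc a b := Icc_subset_Icc_left hs.1
    have hfb := norm_le_norm_mul_exp_of_norm_deriv_le hs.2 (fun t ht => hf t (hsub ht))
      (fun t ht => hK t (hsub ht))
    rw [hfs, norm_zero, zero_mul] at hfb
    exact hneg.ne (norm_le_zero_iff.1 hfb)
  have hnorm := norm_mul_exp_le_norm_of_norm_deriv_le hab hf hK
  rwa [norm_of_nonneg ha, norm_of_nonneg hb] at hnorm

theorem exists_le_mul_exp_of_le_mul_of_le_mul_exp {ρ : ℝ → ℝ} {A B l x α : ℝ} (hA : 0 < A)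
    (hB : 0 < B) (hl : 0 < l) (hx : 0 ≤ x) (hAα : A * x < α) (h₁ : ∀ t, 0 ≤ t → ρ t ≤ A * x)
    (h₂ : ∀ t, 0 ≤ t → ρ t ≤ B * exp (-l * t) * x) :
    ∃ β Λ, 0 < β ∧ 0 < Λ ∧
      ∀ t, 0 ≤ t → ρ t ≤ β * exp (-Λ * t) * x ∧ β * exp (-Λ * t) * x < α := by
  -- Interpolate geometrically between the two bounds, with a small weight `s` on the decaying one.
  have hlim : Tendsto (fun s : ℝ => A ^ (1 - s) * B ^ s * x) (𝓝[>] 0) (𝓝 (A * x)) := by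
    have hcont : Continuous fun s : ℝ => A ^ (1 - s) * B ^ s * x := by
      fun_prop (disch := positivity)
    simpa using (hcont.tendsto 0).mono_left nhdsWithin_le_nhds
  obtain ⟨s, hsα, hs0, hs1⟩ :=
    ((hlim.eventually_lt_const hAα).and (Ioo_mem_nhdsGT zero_lt_one)).exists
  refine ⟨A ^ (1 - s) * B ^ s, l * s, by positivity, by positivity, fun t ht => ⟨?_, ?_⟩⟩
  · set C := B * exp (-l * t)
    have hC : 0 < C := by positivity
    have hmin : min A C ≤ A ^ (1 - s) * C ^ s := by
      calc min A C = min A C ^ (1 - s) * min A C ^ s := by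
            rw [← rpow_add (lt_min hA hC), sub_add_cancel, rpow_one]
        _ ≤ A ^ (1 - s) * C ^ s := by
            gcongr
            exacts [min_le_left _ _, min_le_right _ _]
    calc ρ t ≤ min A C * x := by
          rw [min_mul_of_nonneg _ _ hx]; exact le_min (h₁ t ht) (h₂ t ht)
      _ ≤ A ^ (1 - s) * C ^ s * x := by gcongr
      _ = A ^ (1 - s) * B ^ s * exp (-(l * s) * t) * x := by
          rw [mul_rpow hB.le (exp_pos _).le, ← exp_mul]; ring_nf
  · have hexp : exp (-(l * s) * t) ≤ 1 := exp_le_one_iff.2 (by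
      rw [neg_mul]; exact neg_nonpos.2 (by positivity))
    calc A ^ (1 - s) * B ^ s * exp (-(l * s) * t) * x
        ≤ A ^ (1 - s) * B ^ s * 1 * x := by gcongr
      _ < α := by rwa [mul_one]

theorem natFloor_mul_sub_le_intervalIntegral {f g : ℝ → ℝ} {T x y : ℝ} (hT : 0 < T)
    (hf : Continuous f) (hfT : f.Periodic T) (hg : Continuous g) (hgT : g.Periodic T)
    (hg0 : ∀ z, 0 ≤ g z) (hgf : ∀ z, -g z ≤ f z) (hxy : x ≤ y) :
    ⌊(y - x) / T⌋₊ * (∫ z in 0..T, f z) - ∫ z in 0..T, g z ≤ ∫ z in x..y, f z := by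
  have hfi := fun a b => hf.intervalIntegrable (μ := volume) a b
  have hgi := fun a b => hg.intervalIntegrable (μ := volume) a b
  set k := ⌊(y - x) / T⌋₊
  set w := x + k * T with hw
  have hwy : w ≤ y := by
    have := (le_div_iff₀ hT).1 (Nat.floor_le (div_nonneg (sub_nonneg.2 hxy) hT.le))
    linarith
  have hyw : y ≤ w + T := by
    have := (div_lt_iff₀ hT).1 (Nat.lt_floor_add_one ((y - x) / T))
    linarith
  have hperiods : ∫ z in x..w, f z = k * ∫ z in 0..T, f z := by
    simpa [hw, hfT.intervalIntegral_add_eq x 0] using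
      hfT.intervalIntegral_add_zsmul_eq k x hfi
  have hrest : -∫ z in 0..T, g z ≤ ∫ z in w..y, f z := by
    calc -∫ z in 0..T, g z = -∫ z in w..(w + T), g z := by
          rw [hgT.intervalIntegral_add_eq w 0, zero_add]
      _ ≤ -∫ z in w..y, g z := by
          gcongr
          exact intervalIntegral.integral_mono_interval le_rfl hwy hyw
            (ae_of_all _ hg0) (hgi _ _)
      _ = ∫ z in w..y, -g z := intervalIntegral.integral_neg.symm
      _ ≤ ∫ z in w..y, f z :=
          intervalIntegral.integral_mono_on hwy (hg.neg.intervalIntegrable _ _) (hfi _ _)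
            fun z _ => hgf z
  rw [← intervalIntegral.integral_add_adjacent_intervals (hfi x w) (hfi w y), hperiods]
  linarith

theorem tan_half_le_mul_exp_neg_integral {r φ φ' p g : ℝ → ℝ} {a b : ℝ} (hab : a ≤ b)
    (hg : Continuous g)
    (hr : ∀ t ∈ Icc a b, HasDerivAt r (-p t * sin (r t)) t)
    (hφ : ∀ t ∈ Icc a b, HasDerivAt φ (φ' t) t)
    (hr0 : ∀ t ∈ Icc a b, 0 ≤ r t) (hrπ : ∀ t ∈ Icc a b, r t < π)
    (hgp : ∀ t ∈ Icc a b, g (φ t) * φ' t ≤ p t) :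
    tan (r b / 2) ≤ tan (r a / 2) * exp (-∫ z in φ a..φ b, g z) := by
  set V : ℝ → ℝ := fun t => tan (r t / 2) * exp (∫ z in φ a..φ t, g z) with hV
  have hderiv : ∀ t ∈ Icc a b, HasDerivAt V (V t * (g (φ t) * φ' t - p t)) t := by
    intro t ht
    have hcos : cos (r t / 2) ≠ 0 :=
      (cos_pos_of_mem_Ioo ⟨by linarith [hr0 t ht, pi_pos], by linarith [hrπ t ht]⟩).ne'
    have hsin : sin (r t) = 2 * sin (r t / 2) * cos (r t / 2) := by
      rw [← sin_two_mul, mul_div_cancel₀ _ two_ne_zero]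
    have htan := (hasDerivAt_tan hcos).comp t ((hr t ht).div_const 2)
    have hint := (hg.integral_hasStrictDerivAt (φ a) (φ t)).hasDerivAt.comp t (hφ t ht)
    refine (htan.mul hint.exp).congr_deriv ?_
    simp only [hV, Function.comp, hsin, tan_eq_sin_div_cos]
    field_simp
    ring
  have hanti : AntitoneOn V (Icc a b) := by
    refine antitoneOn_of_hasDerivWithinAt_nonpos (convex_Icc a b)
      (fun t ht => (hderiv t ht).continuousAt.continuousWithinAt)
      (fun t ht => (hderiv t (interior_subset ht)).hasDerivWithinAt) fun t ht => ?_
    have ht' := interior_subset ht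
    have htan : 0 ≤ tan (r t / 2) := tan_nonneg_of_nonneg_of_le_pi_div_two
      (by linarith [hr0 t ht']) (by linarith [hrπ t ht'])
    exact mul_nonpos_of_nonneg_of_nonpos (by positivity) (sub_nonpos.2 (hgp t ht'))
  have hVab : V b ≤ V a := hanti (left_mem_Icc.2 hab) (right_mem_Icc.2 hab) hab
  rw [exp_neg, ← div_eq_mul_inv, le_div_iff₀ (exp_pos _)]
  simpa [hV] using hVab

end Calculus

section Influence

variable {n : ℕ}

theorem aW_pos (n : ℕ) : 0 < aW n := by
  unfold aW; positivity

theorem aW_succ (n : ℕ) : aW (n + 1) * (2 * n + 1) = aW n * (n + 1) := by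
  unfold aW
  rw [show 2 * (n + 1) = 2 * n + 1 + 1 by ring, Nat.factorial_succ (2 * n + 1),
    Nat.factorial_succ (2 * n), Nat.factorial_succ n]
  push_cast
  field_simp
  ring

@[fun_prop]
theorem continuous_influence (n : ℕ) : Continuous (influence n) := by
  unfold influence; fun_prop

theorem periodic_influence (n : ℕ) : (influence n).Periodic (2 * π) := fun x => by
  simp [influence]

theorem one_add_cos_nonneg (x : ℝ) : 0 ≤ 1 + cos x := by
  linarith [neg_one_le_cos x]

theorem influence_nonneg (n : ℕ) (x : ℝ) : 0 ≤ influence n x :=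
  mul_nonneg (aW_pos n).le (pow_nonneg (one_add_cos_nonneg x) n)

theorem influence_le (n : ℕ) (x : ℝ) : influence n x ≤ 2 ^ n * aW n := by
  rw [influence, mul_comm]
  have := aW_pos n
  gcongr
  exacts [one_add_cos_nonneg x, by linarith [cos_le_one x]]

theorem influence_le_aW_of_cos_nonpos {x : ℝ} (hx : cos x ≤ 0) : influence n x ≤ aW n :=
  mul_le_of_le_one_right (aW_pos n).le (pow_le_one₀ (one_add_cos_nonneg x) (by linarith))

theorem integral_one_add_cos_pow (n : ℕ) :
    ∫ x in 0..2 * π, (1 + cos x) ^ n = 2 ^ (n + 1) * ∫ x in 0..π, cos x ^ (2 * n) := by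
  have hhalf : ∀ x, (1 + cos x) ^ n = 2 ^ n * cos (x / 2) ^ (2 * n) := fun x => by
    rw [pow_mul, cos_sq, mul_div_cancel₀ _ two_ne_zero, ← mul_pow]
    ring
  simp_rw [hhalf]
  rw [intervalIntegral.integral_const_mul,
    intervalIntegral.integral_comp_div (fun x => cos x ^ (2 * n)) two_ne_zero, zero_div,
    mul_div_cancel_left₀ _ two_ne_zero, smul_eq_mul]
  ring

theorem integral_influence (n : ℕ) : ∫ x in 0..2 * π, influence n x = 2 * π := by
  simp only [influence, intervalIntegral.integral_const_mul, integral_one_add_cos_pow]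
  induction n with
  | zero => simp [aW]
  | succ n ih =>
    rw [mul_add_one 2 n, integral_cos_pow, ← ih]
    have hsucc : aW (n + 1) = aW n * (n + 1) / (2 * n + 1) := by
      rw [eq_div_iff (by positivity), aW_succ]
    rw [hsucc, sin_pi, sin_zero]
    push_cast
    field_simp
    ring

theorem integral_influence_mul_cos (n : ℕ) :
    ∫ x in 0..2 * π, influence n x * cos x = 2 * π * (n / (n + 1)) := by
  have hrec : ∀ x, influence n x * cos x =
      (2 * n + 1) / (n + 1) * influence (n + 1) x - influence n x := fun x => by
    have hsucc : aW n = aW (n + 1) * (2 * n + 1) / (n + 1) := by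
      rw [eq_div_iff (by positivity), aW_succ]
    simp only [influence, hsucc]
    field_simp
    ring
  simp_rw [hrec]
  rw [intervalIntegral.integral_sub
      (Continuous.intervalIntegrable (by fun_prop) _ _)
      (Continuous.intervalIntegrable (by fun_prop) _ _),
    intervalIntegral.integral_const_mul, integral_influence, integral_influence]
  field_simp
  ring

theorem one_le_two_pow_mul_aW (n : ℕ) : 1 ≤ 2 ^ n * aW n := by
  -- The mean value of the influence function is `1`.
  have hmono : ∫ x in 0..2 * π, influence n x ≤ ∫ _ in 0..2 * π, 2 ^ n * aW n :=
    intervalIntegral.integral_mono_on (by positivity)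
      ((continuous_influence n).intervalIntegrable _ _) intervalIntegrable_const
      fun x _ => influence_le n x
  rw [integral_influence, intervalIntegral.integral_const, sub_zero, smul_eq_mul] at hmono
  exact one_le_of_le_mul_left₀ two_pi_pos hmono

/-- The Lipschitz constant `max |I_n'|` of the influence function, for `n ≥ 1`; the maximum is
attained where `cos θ = 1 - 1 / n`. -/
noncomputable def influenceLip (n : ℕ) : ℝ :=
  aW n * (2 ^ (n - 1) * (√(2 * n - 1) * ((2 * n - 1) / (2 * n)) ^ (n - 1)))

theorem mul_one_add_cos_pow_mul_abs_sin_le (k : ℕ) (x : ℝ) :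
    (k + 1) * (1 + cos x) ^ k * |sin x| ≤
      2 ^ k * (√(2 * k + 1) * ((2 * k + 1) / (2 * (k + 1))) ^ k) := by
  set p : ℝ := (2 * k + 1) / (2 * (k + 1)) with hp
  have hp0 : 0 < p := by positivity
  -- Squared, the left side is a polynomial in `1 + cos x = 2 * p * s`, maximal at `s = 1`.
  obtain ⟨s, hs⟩ : ∃ s, 1 + cos x = 2 * p * s := ⟨(1 + cos x) / (2 * p), by field_simp⟩
  have hs0 : 0 ≤ s := nonneg_of_mul_nonneg_right (hs ▸ one_add_cos_nonneg x) (by positivity)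
  have hsin : |sin x| ^ 2 = 2 * p * s * (2 - 2 * p * s) := by
    rw [sq_abs, sin_sq, ← hs]; ring
  have hbound := pow_mul_add_one_sub_mul_le_one (2 * k + 1) hs0
  push_cast at hbound
  refine (sq_le_sq₀ (by have := one_add_cos_nonneg x; positivity) (by positivity)).1 ?_
  calc ((k + 1) * (1 + cos x) ^ k * |sin x|) ^ 2
      = (2 ^ k * p ^ k) ^ 2 * (2 * k + 1) *
          (s ^ (2 * k + 1) * (2 * k + 1 + 1 - (2 * k + 1) * s)) := by
        have hpk : 2 * (k : ℝ) + 1 = p * (2 * (k + 1)) := by rw [hp]; field_simp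
        rw [mul_pow, hsin, hs, add_assoc _ (1 : ℝ) 1, one_add_one_eq_two, ← mul_add_one, hpk]
        ring_nf
    _ ≤ (2 ^ k * p ^ k) ^ 2 * (2 * k + 1) := mul_le_of_le_one_right (by positivity) hbound
    _ = (2 ^ k * (√(2 * k + 1) * p ^ k)) ^ 2 := by
        rw [mul_pow _ (_ * _), mul_pow √_, sq_sqrt (by positivity)]; ring

theorem hasDerivAt_influence (n : ℕ) (x : ℝ) :
    HasDerivAt (influence n) (aW n * (n * (1 + cos x) ^ (n - 1) * -sin x)) x :=
  (((hasDerivAt_cos x).const_add 1).pow n).const_mul (aW n)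

theorem abs_influence_sub_le (hn : n ≠ 0) (x y : ℝ) :
    |influence n x - influence n y| ≤ influenceLip n * |x - y| := by
  refine convex_univ.norm_image_sub_le_of_norm_hasDerivWithin_le
    (fun z _ => (hasDerivAt_influence n z).hasDerivWithinAt) (fun z _ => ?_)
    (Set.mem_univ y) (Set.mem_univ x)
  obtain ⟨k, rfl⟩ := Nat.exists_eq_succ_of_ne_zero hn
  have hbound := mul_one_add_cos_pow_mul_abs_sin_le k z
  rw [norm_mul, norm_mul, norm_neg, norm_of_nonneg (aW_pos _).le,
    norm_of_nonneg (mul_nonneg (Nat.cast_nonneg _) (pow_nonneg (one_add_cos_nonneg z) _)),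
    Real.norm_eq_abs, influenceLip]
  push_cast
  rw [show 2 * ((k : ℝ) + 1) - 1 = 2 * k + 1 by ring]
  exact mul_le_mul_of_nonneg_left hbound (aW_pos _).le

theorem one_le_influenceLip_mul_pi (hn : n ≠ 0) : 1 ≤ influenceLip n * π := by
  calc 1 ≤ 2 ^ n * aW n := one_le_two_pow_mul_aW n
    _ ≤ |influence n 0 - influence n π| := by
        simp only [influence, cos_zero, cos_pi]
        norm_num [hn, mul_comm, le_abs_self]
    _ ≤ influenceLip n * |0 - π| := abs_influence_sub_le hn 0 π
    _ = influenceLip n * π := by rw [zero_sub, abs_neg, abs_of_pos pi_pos]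

theorem influenceLip_pos (hn : n ≠ 0) : 0 < influenceLip n :=
  pos_of_mul_pos_left (zero_lt_one.trans_le (one_le_influenceLip_mul_pi hn)) pi_pos.le

end Influence

section CosParts

@[fun_prop]
theorem continuous_posPart_cos : Continuous fun x : ℝ => (cos x)⁺ :=
  continuous_posPart.comp continuous_cos

@[fun_prop]
theorem continuous_negPart_cos : Continuous fun x : ℝ => (cos x)⁻ :=
  continuous_negPart.comp continuous_cos

theorem integral_negPart_cos : ∫ x in 0..2 * π, (cos x)⁻ = 2 := by
  have hper : (fun x : ℝ => (cos x)⁻).Periodic (2 * π) := fun x => by simp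
  have hright : ∫ x in -(π / 2)..π / 2, (cos x)⁻ = 0 := by
    rw [← intervalIntegral.integral_zero]
    refine intervalIntegral.integral_congr fun x hx => negPart_eq_zero.2 ?_
    rw [Set.uIcc_of_le (by linarith [pi_pos])] at hx
    exact cos_nonneg_of_mem_Icc hx
  have hleft : ∫ x in π / 2..-(π / 2) + 2 * π, (cos x)⁻ = 2 := by
    have hneg : ∫ x in π / 2..-(π / 2) + 2 * π, (cos x)⁻ =
        ∫ x in π / 2..-(π / 2) + 2 * π, -cos x := by
      refine intervalIntegral.integral_congr fun x hx => negPart_of_nonpos ?_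
      rw [Set.uIcc_of_le (by linarith [pi_pos])] at hx
      exact cos_nonpos_of_pi_div_two_le_of_le hx.1 (by linarith [hx.2])
    rw [hneg, intervalIntegral.integral_neg, integral_cos, sin_add_two_pi, sin_neg, sin_pi_div_two]
    norm_num
  rw [← zero_add (2 * π), hper.intervalIntegral_add_eq 0 (-(π / 2)),
    ← intervalIntegral.integral_add_adjacent_intervals
      (continuous_negPart_cos.intervalIntegrable _ (π / 2))
      (continuous_negPart_cos.intervalIntegrable _ _), hright, hleft, zero_add]

theorem integral_posPart_cos : ∫ x in 0..2 * π, (cos x)⁺ = 2 := by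
  have hsplit : ∀ x, (cos x)⁺ = cos x + (cos x)⁻ := fun x =>
    sub_eq_iff_eq_add.1 (posPart_sub_negPart (cos x))
  simp_rw [hsplit]
  rw [intervalIntegral.integral_add (continuous_cos.intervalIntegrable _ _)
    (continuous_negPart_cos.intervalIntegrable _ _), integral_negPart_cos]
  simp

end CosParts

section DecayRate

variable {n : ℕ} {E x : ℝ}

/-- A lower bound, per unit of the phase `φ` and in units of `κ / ν`, for the logarithmic decay
rate `κ J cos φ` of `tan (r / 2)`, valid when the mean influence `J` is within `E` of `I_n(φ)`. The
factors `2 / 3` and `2` account for a midpoint velocity between `ν / 2` and `3 * ν / 2`. -/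
noncomputable def decayRate (n : ℕ) (E x : ℝ) : ℝ :=
  2 / 3 * ((cos x)⁺ * (influence n x - E)⁺) - 2 * ((cos x)⁻ * (influence n x + E))

theorem continuous_decayRate (n : ℕ) (E : ℝ) : Continuous (decayRate n E) := by
  have : Continuous fun x : ℝ => (influence n x - E)⁺ :=
    continuous_posPart.comp ((continuous_influence n).sub continuous_const)
  unfold decayRate
  fun_prop

theorem periodic_decayRate (n : ℕ) (E : ℝ) : (decayRate n E).Periodic (2 * π) := fun x => by
  simp [decayRate, periodic_influence n x]

theorem decayRate_mul_le {ν J d : ℝ} (hJ : 0 ≤ J) (hJE : |J - influence n x| ≤ E)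
    (hd₁ : ν / 2 ≤ d) (hd₂ : d ≤ 3 * ν / 2) : decayRate n E x * d ≤ ν * (J * cos x) := by
  obtain ⟨hJ₁, hJ₂⟩ := abs_le.1 hJE
  have hpart : (influence n x - E)⁺ ≤ J := max_le (by linarith) hJ
  have hpart' : J ≤ influence n x + E := by linarith
  have hν : 0 ≤ ν := by linarith
  have hd₁' : ν ≤ 2 * d := by linarith
  have hd₂' : 2 / 3 * d ≤ ν := by linarith
  have hpos : (cos x)⁺ * (influence n x - E)⁺ * (2 / 3 * d) ≤ (cos x)⁺ * J * ν := by
    have : 0 ≤ 2 / 3 * d := by linarith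
    gcongr
  have hneg : (cos x)⁻ * J * ν ≤ (cos x)⁻ * (influence n x + E) * (2 * d) := by
    have := hJ.trans hpart'
    gcongr
  calc decayRate n E x * d
      = (cos x)⁺ * (influence n x - E)⁺ * (2 / 3 * d) -
          (cos x)⁻ * (influence n x + E) * (2 * d) := by rw [decayRate]; ring
    _ ≤ (cos x)⁺ * J * ν - (cos x)⁻ * J * ν := by linarith
    _ = ν * (J * ((cos x)⁺ - (cos x)⁻)) := by ring
    _ = ν * (J * cos x) := by rw [posPart_sub_negPart]

theorem negPart_cos_mul_influence_le (n : ℕ) (x : ℝ) :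
    (cos x)⁻ * influence n x ≤ aW n * (cos x)⁻ := by
  rcases le_total 0 (cos x) with hx | hx
  · simp [negPart_of_nonneg hx]
  · rw [mul_comm]
    gcongr
    exact influence_le_aW_of_cos_nonpos hx

theorem neg_le_decayRate (n : ℕ) (E x : ℝ) : -(2 * (aW n + E) * (cos x)⁻) ≤ decayRate n E x := by
  have hneg := negPart_cos_mul_influence_le n x
  have hpos : 0 ≤ (cos x)⁺ * (influence n x - E)⁺ := by positivity
  rw [decayRate]
  linarith

theorem le_decayRate (n : ℕ) (E x : ℝ) :
    2 / 3 * (influence n x * cos x) - 4 / 3 * aW n * (cos x)⁻ - 2 / 3 * E * (cos x)⁺ -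
      2 * E * (cos x)⁻ ≤ decayRate n E x := by
  have hneg := negPart_cos_mul_influence_le n x
  have hpos : (cos x)⁺ * (influence n x - E) ≤ (cos x)⁺ * (influence n x - E)⁺ := by
    gcongr; exact le_posPart _
  have hcos : influence n x * cos x = influence n x * ((cos x)⁺ - (cos x)⁻) := by
    rw [posPart_sub_negPart]
  rw [decayRate]
  linarith

/-- The net logarithmic decay of `tan (r / 2)`, in units of `κ / ν`, guaranteed by one full turn of
the midpoint. -/
noncomputable def turnDecay (n : ℕ) (E : ℝ) : ℝ := ∫ x in 0..2 * π, decayRate n E x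

/-- A bound, in units of `κ / ν`, for the logarithmic growth of `tan (r / 2)` during an incomplete
turn of the midpoint. -/
noncomputable def turnGrowth (n : ℕ) (E : ℝ) : ℝ := 4 * (aW n + E)

theorem turnGrowth_nonneg (n : ℕ) (hE : 0 ≤ E) : 0 ≤ turnGrowth n E := by
  have := aW_pos n
  unfold turnGrowth
  positivity

theorem le_turnDecay (n : ℕ) (E : ℝ) :
    4 / 3 * π * (n / (n + 1)) - 8 / 3 * aW n - 16 / 3 * E ≤ turnDecay n E := by
  refine le_trans (le_of_eq ?_) (intervalIntegral.integral_mono_on two_pi_pos.le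
    (Continuous.intervalIntegrable (by fun_prop) _ _)
    ((continuous_decayRate n E).intervalIntegrable _ _) fun x _ => le_decayRate n E x)
  simp (disch := exact Continuous.intervalIntegrable (by fun_prop) _ _) only
    [intervalIntegral.integral_sub, intervalIntegral.integral_const_mul,
    integral_influence_mul_cos, integral_posPart_cos, integral_negPart_cos]
  ring

theorem le_integral_decayRate (hE : 0 ≤ E) {a b : ℝ} (hab : a ≤ b) :
    ⌊(b - a) / (2 * π)⌋₊ * turnDecay n E - turnGrowth n E ≤ ∫ x in a..b, decayRate n E x := by
  have ha := aW_pos n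
  have hbound := natFloor_mul_sub_le_intervalIntegral (g := fun x => 2 * (aW n + E) * (cos x)⁻)
    two_pi_pos (continuous_decayRate n E) (periodic_decayRate n E)
    (continuous_negPart_cos.const_mul _) (fun x => by simp)
    (fun x => by positivity) (neg_le_decayRate n E) hab
  rw [intervalIntegral.integral_const_mul, integral_negPart_cos, ← turnDecay] at hbound
  rw [turnGrowth]
  linarith

end DecayRate

section MeanInfluence

open scoped BigOperators

variable {ι : Type*} [Fintype ι] {n : ℕ}

/-- The mean influence `(1 / N) ∑ j, I_n(θ_j)` through which the oscillators interact. -/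
noncomputable def meanInfluence (n : ℕ) (x : ι → ℝ) : ℝ := 𝔼 i, influence n (x i)

theorem meanInfluence_nonneg (n : ℕ) (x : ι → ℝ) : 0 ≤ meanInfluence n x :=
  Finset.expect_nonneg fun _ _ => influence_nonneg n _

theorem meanInfluence_le [Nonempty ι] (n : ℕ) (x : ι → ℝ) : meanInfluence n x ≤ 2 ^ n * aW n :=
  Finset.expect_le Finset.univ_nonempty fun _ _ => influence_le n _

theorem abs_meanInfluence_sub_le [Nonempty ι] (hn : n ≠ 0) {x : ι → ℝ} {y ρ : ℝ}
    (h : ∀ i, |x i - y| ≤ ρ) : |meanInfluence n x - influence n y| ≤ influenceLip n * ρ := by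
  have hL := influenceLip_pos hn
  calc |meanInfluence n x - influence n y|
      = |𝔼 i, (influence n (x i) - influence n y)| := by
        rw [Finset.expect_sub_distrib, Fintype.expect_const, meanInfluence]
    _ ≤ 𝔼 i, |influence n (x i) - influence n y| := Finset.abs_expect_le _ _
    _ ≤ influenceLip n * ρ := Finset.expect_le Finset.univ_nonempty fun i _ =>
        (abs_influence_sub_le hn _ _).trans (by gcongr; exact h i)

end MeanInfluence

section IsWinfreeSol

variable {n N : ℕ} {κ : ℝ} {ν : Fin N → ℝ} {θ : Fin N → ℝ → ℝ}

theorem IsWinfreeSol.hasDerivAt (h : IsWinfreeSol n N ν κ θ) (i : Fin N) {t : ℝ} (ht : 0 ≤ t) :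
    HasDerivAt (θ i) (ν i - κ * meanInfluence n (θ · t) * sin (θ i t)) t := by
  convert h i t ht using 1
  rw [meanInfluence, Fintype.expect_eq_sum_div_card, Fintype.card_fin, sens]
  ring

theorem IsWinfreeSol.sub_mul_exp_le (h : IsWinfreeSol n N ν κ θ) (hκ : 0 ≤ κ)
    {i j : Fin N} (hν : ν i = ν j) (h₀ : θ j 0 ≤ θ i 0) {t : ℝ} (ht : 0 ≤ t) :
    (θ i 0 - θ j 0) * exp (-(κ * (2 ^ n * aW n)) * t) ≤ θ i t - θ j t := by
  have : Nonempty (Fin N) := ⟨i⟩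
  set J : ℝ → ℝ := fun s => meanInfluence n (θ · s)
  have hderiv : ∀ s ∈ Set.Icc 0 t, HasDerivAt (fun s => θ i s - θ j s)
      (-(κ * J s) * (sin (θ i s) - sin (θ j s))) s := fun s hs =>
    ((h.hasDerivAt i hs.1).sub (h.hasDerivAt j hs.1)).congr_deriv (by rw [hν]; ring)
  have hbound : ∀ s ∈ Set.Icc 0 t, |-(κ * J s) * (sin (θ i s) - sin (θ j s))| ≤
      κ * (2 ^ n * aW n) * |θ i s - θ j s| := fun s _ => by
    have hJ₀ : 0 ≤ J s := meanInfluence_nonneg n _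
    have hJ : J s ≤ 2 ^ n * aW n := meanInfluence_le n _
    have hsin : |sin (θ i s) - sin (θ j s)| ≤ |θ i s - θ j s| := abs_sin_sub_sin_le _ _
    rw [abs_mul, abs_neg, abs_of_nonneg (mul_nonneg hκ hJ₀)]
    have := aW_pos n
    gcongr
  simpa using mul_exp_le_of_abs_deriv_le ht hderiv hbound (sub_nonneg.2 h₀)

theorem IsWinfreeSol.le_of_le_zero (h : IsWinfreeSol n N ν κ θ) (hκ : 0 ≤ κ)
    {i j : Fin N} (hν : ν i = ν j) (h₀ : θ j 0 ≤ θ i 0) {t : ℝ} (ht : 0 ≤ t) : θ j t ≤ θ i t :=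
  sub_nonneg.1 ((mul_nonneg (sub_nonneg.2 h₀) (exp_pos _).le).trans (h.sub_mul_exp_le hκ hν h₀ ht))

theorem IsWinfreeSol.exists_forall_mem_Icc [NeZero N] {ν : ℝ}
    (h : IsWinfreeSol n N (fun _ => ν) κ θ) (hκ : 0 ≤ κ) :
    ∃ i j, ∀ t, 0 ≤ t → ∀ k, θ k t ∈ Set.Icc (θ j t) (θ i t) := by
  obtain ⟨i, hi⟩ := Finite.exists_max fun k => θ k 0
  obtain ⟨j, hj⟩ := Finite.exists_min fun k => θ k 0
  exact ⟨i, j, fun t ht k =>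
    ⟨h.le_of_le_zero hκ rfl (hj k) ht, h.le_of_le_zero hκ rfl (hi k) ht⟩⟩

end IsWinfreeSol

section ExtremalPair

open Set

variable {n : ℕ} {κ ν α T : ℝ} {r φ J : ℝ → ℝ}

/-- The equations satisfied by half the gap `r` and the midpoint `φ` of the phases of two identical
oscillators between which all others lie, when driven by the mean influence `J` of the ensemble
through a coupling weak enough for the midpoint to keep rotating. -/
structure ExtremalPair (n : ℕ) (κ ν : ℝ) (r φ J : ℝ → ℝ) : Prop where
  hasDerivAt_half_gap : ∀ t, 0 ≤ t → HasDerivAt r (-(κ * (J t * cos (φ t))) * sin (r t)) t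
  hasDerivAt_midpoint : ∀ t, 0 ≤ t → HasDerivAt φ (ν - κ * J t * (sin (φ t) * cos (r t))) t
  half_gap_nonneg : ∀ t, 0 ≤ t → 0 ≤ r t
  mean_nonneg : ∀ t, 0 ≤ t → 0 ≤ J t
  mul_mean_le : ∀ t, 0 ≤ t → κ * J t ≤ ν / 2
  abs_mean_sub_le : ∀ t, 0 ≤ t → |J t - influence n (φ t)| ≤ influenceLip n * r t

theorem IsWinfreeSol.extremalPair {N : ℕ} {θ : Fin N → ℝ → ℝ}
    (h : IsWinfreeSol n N (fun _ => ν) κ θ) (hn : n ≠ 0) (hκ₀ : 0 ≤ κ)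
    (hκ : κ * (2 ^ (n + 1) * aW n) ≤ ν) {i j : Fin N}
    (hij : ∀ t, 0 ≤ t → ∀ k, θ k t ∈ Icc (θ j t) (θ i t)) :
    ExtremalPair n κ ν (fun t => (θ i t - θ j t) / 2) (fun t => (θ i t + θ j t) / 2)
      fun t => meanInfluence n (θ · t) where
  hasDerivAt_half_gap t ht := by
    refine (((h.hasDerivAt i ht).sub (h.hasDerivAt j ht)).div_const 2).congr_deriv ?_
    linear_combination -(κ * meanInfluence n (θ · t) / 2) * sin_sub_sin (θ i t) (θ j t)
  hasDerivAt_midpoint t ht := by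
    refine (((h.hasDerivAt i ht).add (h.hasDerivAt j ht)).div_const 2).congr_deriv ?_
    linear_combination -(κ * meanInfluence n (θ · t) / 2) * sin_add_sin (θ i t) (θ j t)
  half_gap_nonneg t ht := by linarith [(hij t ht i).1]
  mean_nonneg t _ := meanInfluence_nonneg n _
  mul_mean_le t _ := by
    have : Nonempty (Fin N) := ⟨i⟩
    rw [pow_succ] at hκ
    linarith [mul_le_mul_of_nonneg_left (meanInfluence_le n (θ · t)) hκ₀]
  abs_mean_sub_le t ht := by
    have : Nonempty (Fin N) := ⟨i⟩
    refine abs_meanInfluence_sub_le hn fun k => ?_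
    obtain ⟨hj, hi⟩ := hij t ht k
    exact abs_sub_le_iff.2 ⟨by linarith, by linarith⟩

namespace ExtremalPair

theorem velocity_mem_Icc (h : ExtremalPair n κ ν r φ J) (hκ : 0 ≤ κ) {t : ℝ} (ht : 0 ≤ t) :
    ν - κ * J t * (sin (φ t) * cos (r t)) ∈ Icc (ν / 2) (3 * ν / 2) := by
  have htrig : |sin (φ t) * cos (r t)| ≤ 1 := by
    rw [abs_mul]
    exact mul_le_one₀ (abs_sin_le_one _) (abs_nonneg _) (abs_cos_le_one _)
  have hle : |κ * J t * (sin (φ t) * cos (r t))| ≤ ν / 2 := by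
    rw [abs_mul, abs_of_nonneg (mul_nonneg hκ (h.mean_nonneg t ht))]
    exact (mul_le_of_le_one_right (mul_nonneg hκ (h.mean_nonneg t ht)) htrig).trans
      (h.mul_mean_le t ht)
  obtain ⟨hl, hu⟩ := abs_le.1 hle
  exact ⟨by linarith, by linarith⟩

theorem mul_le_midpoint_sub (h : ExtremalPair n κ ν r φ J) (hκ : 0 ≤ κ) (hT : 0 ≤ T) :
    ν / 2 * T ≤ φ T - φ 0 := by
  have hderiv := fun t (ht : t ∈ Icc 0 T) => h.hasDerivAt_midpoint t ht.1
  simpa using (convex_Icc 0 T).mul_sub_le_image_sub_of_le_deriv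
    (fun t ht => (hderiv t ht).continuousAt.continuousWithinAt)
    (fun t ht => (hderiv t (interior_subset ht)).differentiableAt.differentiableWithinAt)
    (fun t ht => (hderiv t (interior_subset ht)).deriv ▸
      (h.velocity_mem_Icc hκ (interior_subset ht).1).1)
    0 (left_mem_Icc.2 hT) T (right_mem_Icc.2 hT) hT

theorem tan_half_le (h : ExtremalPair n κ ν r φ J) (hn : n ≠ 0) (hκ : 0 ≤ κ) (hν : 0 < ν)
    (hT : 0 ≤ T) (hαπ : α < π) (hr : ∀ t ∈ Icc 0 T, r t ≤ α) :
    tan (r T / 2) ≤ tan (r 0 / 2) * exp (κ / ν * (turnGrowth n (influenceLip n * α) -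
      ⌊(φ T - φ 0) / (2 * π)⌋₊ * turnDecay n (influenceLip n * α))) := by
  set E := influenceLip n * α
  have hL := influenceLip_pos hn
  have hα : 0 ≤ α := (h.half_gap_nonneg T hT).trans (hr T (right_mem_Icc.2 hT))
  have hφ : φ 0 ≤ φ T := by
    have := h.mul_le_midpoint_sub hκ hT
    have : 0 ≤ ν / 2 * T := by positivity
    linarith
  have hrate : ∀ t ∈ Icc 0 T, κ / ν * decayRate n E (φ t) *
      (ν - κ * J t * (sin (φ t) * cos (r t))) ≤ κ * (J t * cos (φ t)) := fun t ht => by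
    obtain ⟨hd₁, hd₂⟩ := h.velocity_mem_Icc hκ ht.1
    have hJE : |J t - influence n (φ t)| ≤ E :=
      (h.abs_mean_sub_le t ht.1).trans (mul_le_mul_of_nonneg_left (hr t ht) hL.le)
    rw [mul_assoc, div_mul_eq_mul_div, mul_div_assoc]
    gcongr
    exact (div_le_iff₀' hν).2 (decayRate_mul_le (h.mean_nonneg t ht.1) hJE hd₁ hd₂)
  have htan : 0 ≤ tan (r 0 / 2) := by
    have h₀ := left_mem_Icc.2 hT
    exact tan_nonneg_of_nonneg_of_le_pi_div_two
      (by linarith [h.half_gap_nonneg 0 le_rfl]) (by linarith [hr 0 h₀])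
  refine (tan_half_le_mul_exp_neg_integral hT
    ((continuous_decayRate n E).const_mul (κ / ν)) (fun t ht => h.hasDerivAt_half_gap t ht.1)
    (fun t ht => h.hasDerivAt_midpoint t ht.1) (fun t ht => h.half_gap_nonneg t ht.1)
    (fun t ht => (hr t ht).trans_lt hαπ) hrate).trans ?_
  rw [intervalIntegral.integral_const_mul, ← mul_neg]
  gcongr
  linarith [le_integral_decayRate (n := n) (show 0 ≤ E by positivity) hφ]

theorem half_gap_le_exp_mul (h : ExtremalPair n κ ν r φ J) (hn : n ≠ 0) (hκ : 0 ≤ κ) (hν : 0 < ν)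
    (hT : 0 ≤ T) (hαπ : α < π) (hdecay : 0 ≤ turnDecay n (influenceLip n * α))
    (h₀ : exp (κ / ν * turnGrowth n (influenceLip n * α)) * r 0 < α)
    (hr : ∀ t ∈ Icc 0 T, r t ≤ α) :
    r T ≤ exp (κ / ν * turnGrowth n (influenceLip n * α)) * r 0 := by
  have hr₀ := h.half_gap_nonneg 0 le_rfl
  have hrT := h.half_gap_nonneg T hT
  have hα : 0 ≤ α := hrT.trans (hr T (right_mem_Icc.2 hT))
  have hstep := h.tan_half_le hn hκ hν hT hαπ hr
  set b := κ / ν * turnGrowth n (influenceLip n * α) with hb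
  have hb₀ : 0 ≤ b := mul_nonneg (div_nonneg hκ hν.le)
    (turnGrowth_nonneg n (mul_nonneg (influenceLip_pos hn).le hα))
  set y := exp b * r 0 / 2 with hy
  have hy₀ : 0 ≤ y := by positivity
  have hyπ : y < π / 2 := by linarith
  have htan : tan (r T / 2) ≤ tan y := by
    calc tan (r T / 2)
        ≤ tan (r 0 / 2) * exp (κ / ν * (turnGrowth n (influenceLip n * α) -
            ⌊(φ T - φ 0) / (2 * π)⌋₊ * turnDecay n (influenceLip n * α))) := hstep
      _ ≤ tan (r 0 / 2) * exp b := by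
          have : 0 ≤ tan (r 0 / 2) := tan_nonneg_of_nonneg_of_le_pi_div_two (by positivity)
            (by linarith [hr 0 (left_mem_Icc.2 hT)])
          rw [hb]
          gcongr
          exact sub_le_self _ (by positivity)
      _ = tan (exp (-b) * y) * exp b := by
          rw [hy, mul_div_assoc, ← mul_assoc, ← exp_add, neg_add_cancel, exp_zero, one_mul]
      _ ≤ exp (-b) * tan y * exp b := by
          gcongr
          exact tan_mul_le_mul_tan (exp_pos _).le (exp_le_one_iff.2 (neg_nonpos.2 hb₀)) hy₀ hyπ
      _ = tan y := by rw [mul_right_comm, ← exp_add, neg_add_cancel, exp_zero, one_mul]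
  by_contra! hlt
  have hTπ : r T / 2 < π / 2 := by linarith [hr T (right_mem_Icc.2 hT)]
  exact htan.not_gt (tan_lt_tan_of_nonneg_of_lt_pi_div_two hy₀ hTπ (by linarith))

theorem half_gap_lt (h : ExtremalPair n κ ν r φ J) (hn : n ≠ 0) (hκ : 0 ≤ κ) (hν : 0 < ν)
    (hαπ : α < π) (hdecay : 0 ≤ turnDecay n (influenceLip n * α))
    (h₀ : exp (κ / ν * turnGrowth n (influenceLip n * α)) * r 0 < α) {t : ℝ} (ht : 0 ≤ t) :
    r t < α := by
  have hα : 0 ≤ α := (mul_nonneg (exp_pos _).le (h.half_gap_nonneg 0 le_rfl)).trans h₀.le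
  have hgrowth : 0 ≤ κ / ν * turnGrowth n (influenceLip n * α) :=
    mul_nonneg (div_nonneg hκ hν.le)
      (turnGrowth_nonneg n (mul_nonneg (influenceLip_pos hn).le hα))
  have hr₀ : r 0 ≤ α :=
    (le_mul_of_one_le_left (h.half_gap_nonneg 0 le_rfl) (one_le_exp hgrowth)).trans h₀.le
  exact lt_of_forall_Icc_le_imp_lt
    (fun s hs => (h.hasDerivAt_half_gap s hs).continuousAt.continuousWithinAt) hr₀
    (fun _ hT hr => (h.half_gap_le_exp_mul hn hκ hν hT hαπ hdecay h₀ hr).trans_lt h₀) ht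

theorem half_gap_le_mul_exp (h : ExtremalPair n κ ν r φ J) (hn : n ≠ 0) (hκ : 0 ≤ κ) (hν : 0 < ν)
    (hT : 0 ≤ T) (hα : 0 < α) (hαπ : α < π) (hdecay : 0 ≤ turnDecay n (influenceLip n * α))
    (hr : ∀ t ∈ Icc 0 T, r t ≤ α) :
    r T ≤ 2 * tan (α / 2) / α *
      exp (κ / ν * (turnGrowth n (influenceLip n * α) + turnDecay n (influenceLip n * α))) *
      exp (-(κ * turnDecay n (influenceLip n * α) / (4 * π)) * T) * r 0 := by
  set D := turnDecay n (influenceLip n * α)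
  set c := turnGrowth n (influenceLip n * α)
  have hr₀ := h.half_gap_nonneg 0 le_rfl
  have hr₀α := hr 0 (left_mem_Icc.2 hT)
  have hrTα := hr T (right_mem_Icc.2 hT)
  have hturns : ν * T / (4 * π) - 1 ≤ ⌊(φ T - φ 0) / (2 * π)⌋₊ := by
    have hφ : ν * T / (4 * π) ≤ (φ T - φ 0) / (2 * π) := by
      rw [div_le_div_iff₀ (by positivity) (by positivity)]
      nlinarith [h.mul_le_midpoint_sub hκ hT, pi_pos]
    linarith [Nat.sub_one_lt_floor ((φ T - φ 0) / (2 * π))]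
  have htan : tan (r 0 / 2) ≤ r 0 / α * tan (α / 2) := by
    have hc := tan_mul_le_mul_tan (div_nonneg hr₀ hα.le) ((div_le_one hα).2 hr₀α) (half_pos hα).le
      (by linarith)
    rwa [div_mul_div_cancel₀ hα.ne'] at hc
  calc r T ≤ 2 * tan (r T / 2) := by
        linarith [le_tan (by linarith [h.half_gap_nonneg T hT]) (show r T / 2 < π / 2 by linarith)]
    _ ≤ 2 * (tan (r 0 / 2) * exp (κ / ν * (c - ⌊(φ T - φ 0) / (2 * π)⌋₊ * D))) := by
        gcongr
        exact h.tan_half_le hn hκ hν hT hαπ hr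
    _ ≤ 2 * (r 0 / α * tan (α / 2) * exp (κ / ν * (c - (ν * T / (4 * π) - 1) * D))) := by
        have : 0 ≤ tan (α / 2) :=
          tan_nonneg_of_nonneg_of_le_pi_div_two (half_pos hα).le (by linarith)
        gcongr
    _ = 2 * tan (α / 2) / α * exp (κ / ν * (c + D)) * exp (-(κ * D / (4 * π)) * T) * r 0 := by
        rw [mul_assoc (2 * tan (α / 2) / α), ← exp_add]
        field_simp
        ring_nf

theorem exists_half_gap_le_mul_exp (h : ExtremalPair n κ ν r φ J) (hn : n ≠ 0) (hκ : 0 < κ)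
    (hν : 0 < ν) (hαπ : α < π) (hdecay : 0 < turnDecay n (influenceLip n * α))
    (h₀ : exp (κ / ν * turnGrowth n (influenceLip n * α)) * r 0 < α) :
    ∃ β Λ, 0 < β ∧ 0 < Λ ∧
      ∀ t, 0 ≤ t → r t ≤ β * exp (-Λ * t) * r 0 ∧ β * exp (-Λ * t) * r 0 < α := by
  have hα : 0 < α := (mul_nonneg (exp_pos _).le (h.half_gap_nonneg 0 le_rfl)).trans_lt h₀
  have hr : ∀ t, 0 ≤ t → r t ≤ α := fun t ht =>
    (h.half_gap_lt hn hκ.le hν hαπ hdecay.le h₀ ht).le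
  have htan : 0 < tan (α / 2) := tan_pos_of_pos_of_lt_pi_div_two (half_pos hα) (by linarith)
  exact exists_le_mul_exp_of_le_mul_of_le_mul_exp (exp_pos _) (by positivity) (by positivity)
    (h.half_gap_nonneg 0 le_rfl) h₀
    (fun t ht => h.half_gap_le_exp_mul hn hκ.le hν ht hαπ hdecay.le h₀ fun s hs => hr s hs.1)
    (fun t ht => h.half_gap_le_mul_exp hn hκ.le hν ht hα hαπ hdecay.le fun s hs => hr s hs.1)

end ExtremalPair

end ExtremalPair

section Constants

variable {n : ℕ} {κ ν α : ℝ}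

theorem influenceLip_mul_lt (hn : n ≠ 0)
    (hα : α < (π / (2 ^ (n + 1) * aW n) * (n / (n + 1)) - 1 / 2 ^ n) * (1 / √(2 * n - 1)) *
      (2 * n / (2 * n - 1)) ^ (n - 1)) :
    influenceLip n * α < π / 4 * (n / (n + 1)) - aW n / 2 := by
  obtain ⟨k, rfl⟩ := Nat.exists_eq_succ_of_ne_zero hn
  have ha := aW_pos (k + 1)
  have hk : 0 < 2 * ((k + 1 : ℕ) : ℝ) - 1 := by push_cast; linarith [k.cast_nonneg (α := ℝ)]
  refine (mul_lt_mul_of_pos_left hα (influenceLip_pos hn)).trans_eq ?_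
  have := sqrt_pos.2 hk
  simp only [influenceLip, Nat.succ_eq_add_one, Nat.add_sub_cancel, div_pow]
  field_simp
  ring

theorem turnDecay_pos {E : ℝ} (hE : E < π / 4 * (n / (n + 1)) - aW n / 2) :
    0 < turnDecay n E := by
  linarith [le_turnDecay n E]

theorem lt_pi_of_influenceLip_mul_lt (hn : n ≠ 0) (hα : 0 ≤ α)
    (hE : influenceLip n * α < π / 4 * (n / (n + 1)) - aW n / 2) : α < π := by
  have hfrac : π / 4 * (n / (n + 1)) ≤ π / 4 := mul_le_of_le_one_right (by positivity)
    ((div_le_one (by positivity)).2 (by linarith))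
  calc α ≤ influenceLip n * π * α := le_mul_of_one_le_left hα (one_le_influenceLip_mul_pi hn)
    _ = influenceLip n * α * π := by ring
    _ < 1 * π := by
        gcongr
        linarith [aW_pos n, pi_lt_four]
    _ = π := one_mul π

theorem div_mul_turnGrowth_le (hn : n ≠ 0) (hν : 0 < ν) (hα : 0 ≤ α)
    (hκ : κ < ν / (2 ^ (n + 1) * aW n)) :
    κ / ν * turnGrowth n (influenceLip n * α) ≤
      α * √(2 * n - 1) * ((2 * n - 1) / (2 * n)) ^ (n - 1) + 1 / 2 ^ (n - 1) := by
  have ha := aW_pos n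
  have hκν : κ / ν ≤ 1 / (2 ^ (n + 1) * aW n) := by
    rw [div_le_iff₀ hν, one_div_mul_eq_div]
    exact hκ.le
  refine (mul_le_mul_of_nonneg_right hκν (turnGrowth_nonneg n
    (mul_nonneg (influenceLip_pos hn).le hα))).trans_eq ?_
  obtain ⟨k, rfl⟩ := Nat.exists_eq_succ_of_ne_zero hn
  simp only [turnGrowth, influenceLip, Nat.succ_eq_add_one, Nat.add_sub_cancel]
  field_simp
  ring

theorem exp_turnGrowth_mul_lt {x : ℝ} (hn : n ≠ 0) (hν : 0 < ν) (hx₀ : 0 ≤ x)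
    (hκ : κ < ν / (2 ^ (n + 1) * aW n))
    (hx : x < α * exp (-(α * √(2 * n - 1) * ((2 * n - 1) / (2 * n)) ^ (n - 1)) -
      1 / 2 ^ (n - 1))) :
    exp (κ / ν * turnGrowth n (influenceLip n * α)) * x < α := by
  have hα : 0 ≤ α := (pos_of_mul_pos_left (hx₀.trans_lt hx) (exp_pos _).le).le
  rw [← neg_add', exp_neg, ← div_eq_mul_inv, lt_div_iff₀' (exp_pos _)] at hx
  refine lt_of_le_of_lt ?_ hx
  gcongr
  exact div_mul_turnGrowth_le hn hν hα hκ

end Constants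

/-- Exponential decay of the phase diameter for an identical ensemble:
with `R(t) = (max_i θ_i(t) − min_i θ_i(t))/2`, small coupling and small,
well-prepared initial data, `R` decays exponentially and stays below `α`. -/
theorem stmt19 (n N : ℕ) (hn : 2 ≤ n) [NeZero N] (ν : ℝ) (hν : 0 < ν) (κ α : ℝ)
    (θ : Fin N → ℝ → ℝ) (hθ : IsWinfreeSol n N (fun _ => ν) κ θ)
    (R : ℝ → ℝ)
    (hR : ∀ t : ℝ, R t = ((⨆ i : Fin N, θ i t) - (⨅ i : Fin N, θ i t)) / 2)
    (hκ0 : 0 < κ) (hκ : κ < ν / (2 ^ (n + 1) * aW n))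
    (hα0 : 0 < α)
    (hα : α < (Real.pi / (2 ^ (n + 1) * aW n) * ((n : ℝ) / ((n : ℝ) + 1))
                - 1 / 2 ^ n)
              * (1 / Real.sqrt (2 * (n : ℝ) - 1))
              * (2 * (n : ℝ) / (2 * (n : ℝ) - 1)) ^ (n - 1))
    (hR0 : R 0 < α * Real.exp
        (-(α * Real.sqrt (2 * (n : ℝ) - 1) *
            ((2 * (n : ℝ) - 1) / (2 * (n : ℝ))) ^ (n - 1)) - 1 / 2 ^ (n - 1))) :
    ∃ β₁ β₂ Λ₁ Λ₂ : ℝ, 0 < β₁ ∧ 0 < β₂ ∧ 0 < Λ₁ ∧ 0 < Λ₂ ∧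
      ∀ t : ℝ, 0 ≤ t →
        β₁ * Real.exp (-Λ₁ * t) * R 0 ≤ R t ∧
        R t ≤ β₂ * Real.exp (-Λ₂ * t) * R 0 ∧
        β₂ * Real.exp (-Λ₂ * t) * R 0 < α := by
  have hn₀ : n ≠ 0 := by omega
  have hI : 0 < 2 ^ n * aW n := zero_lt_one.trans_le (one_le_two_pow_mul_aW n)
  have hκa : κ * (2 ^ (n + 1) * aW n) ≤ ν := by
    rw [pow_succ', mul_assoc] at hκ ⊢
    exact ((lt_div_iff₀ (by positivity)).1 hκ).le
  have hLα := influenceLip_mul_lt hn₀ hα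
  have hαπ := lt_pi_of_influenceLip_mul_lt hn₀ hα0.le hLα
  obtain ⟨i, j, hij⟩ := hθ.exists_forall_mem_Icc hκ0.le
  have hpair := hθ.extremalPair hn₀ hκ0.le hκa hij
  have hRij : ∀ t, 0 ≤ t → R t = (θ i t - θ j t) / 2 := fun t ht => by
    rw [hR, iSup_sub_iInf_eq_sub (hij t ht)]
  rw [hRij 0 le_rfl] at hR0 ⊢
  have hsmall := exp_turnGrowth_mul_lt hn₀ hν (hpair.half_gap_nonneg 0 le_rfl) hκ hR0
  obtain ⟨β, Λ, hβ, hΛ, hdecay⟩ :=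
    hpair.exists_half_gap_le_mul_exp hn₀ hκ0 hν hαπ (turnDecay_pos hLα) hsmall
  refine ⟨1, β, κ * (2 ^ n * aW n), Λ, one_pos, hβ, by positivity, hΛ, fun t ht => ?_⟩
  rw [hRij t ht]
  refine ⟨?_, hdecay t ht⟩
  linarith [hθ.sub_mul_exp_le hκ0.le rfl (hij 0 le_rfl i).1 ht]
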